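/- arXiv:1608.04507 — 2 statements merged into one kernel-verified Lean document; each statement's English description precedes it below -/
import Mathlib

section
/- Let F : ℝ → ℝ be a strictly increasing continuous cumulative distribution function and let p be the Borel probability measure on ℝ whose distribution function is F. Let D_F ⊆ ℝ^ℕ be the set of all p-equidistributed sequences on ℝ. Then p^ℕ(D_F) = 1, where p^ℕ is the countable product of copies of p on ℝ^ℕ. -/
/-!
The measure `P` is the infinite product measure, so the coordinates are independent with law `p`,
and the strong law of large numbers applied to the indicators of `(-∞, q]` gives, almost surely and
simultaneously for all rational `q`, that the frequency of hits of `(-∞, q]` tends to `F q`.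
The rest is deterministic. Frequencies are monotone in the set, so by continuity of `F` and density
of `ℚ`, the frequency of hits of any `S` with `(-∞, b) ⊆ S ⊆ (-∞, b]` tends to `F b`. The intervals
`[a, b]` and `[a, ∞)` follow by taking differences with `(-∞, a)`.
-/

open MeasureTheory Filter

/-- `P` is the countable product measure `ν^ℕ` on `ℕ → ℝ` of the Borel probability
measure `ν` on `ℝ`: it is a probability measure whose finite-dimensional cylinder
marginals are products of `ν`. -/
def IsCountableProductOf (P : Measure (ℕ → ℝ)) (ν : Measure ℝ) : Prop :=
  IsProbabilityMeasure P ∧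
    ∀ (s : Finset ℕ) (B : ℕ → Set ℝ), (∀ i ∈ s, MeasurableSet (B i)) →
      P {z : ℕ → ℝ | ∀ i ∈ s, z i ∈ B i} = ∏ i ∈ s, ν (B i)

/-- The set `D_F` of all sequences that are `p`-equidistributed on `ℝ`, where `F`
is the distribution function of `p`: for every interval `[a,b]` with
`-∞ ≤ a < b ≤ +∞`, the asymptotic frequency of hits of `[a,b]` equals
`F(b) - F(a)` (with `F(-∞) = 0`, `F(+∞) = 1`). -/
def equidistributedSeqs (F : ℝ → ℝ) : Set (ℕ → ℝ) :=
  {z : ℕ → ℝ |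
    (∀ a b : ℝ, a < b →
      Tendsto (fun n : ℕ =>
          (((Finset.range n).filter (fun k => z k ∈ Set.Icc a b)).card : ℝ) / n)
        atTop (nhds (F b - F a))) ∧
    (∀ b : ℝ,
      Tendsto (fun n : ℕ =>
          (((Finset.range n).filter (fun k => z k ∈ Set.Iic b)).card : ℝ) / n)
        atTop (nhds (F b))) ∧
    (∀ a : ℝ,
      Tendsto (fun n : ℕ =>
          (((Finset.range n).filter (fun k => z k ∈ Set.Ici a)).card : ℝ) / n)
        atTop (nhds (1 - F a)))}

/-- The frequency of hits of `S` among the first `n` terms of `z` (and `0` when `n = 0`). -/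
noncomputable def hitFreq (z : ℕ → ℝ) (S : Set ℝ) (n : ℕ) : ℝ :=
  (∑ k ∈ Finset.range n, S.indicator (fun _ => (1 : ℝ)) (z k)) / n

lemma card_filter_div_eq_hitFreq (z : ℕ → ℝ) (S : Set ℝ) [DecidablePred fun k => z k ∈ S] (n : ℕ) :
    (((Finset.range n).filter (fun k => z k ∈ S)).card : ℝ) / n = hitFreq z S n := by
  classical
  simp only [hitFreq, Set.indicator_apply, Finset.sum_boole]

lemma hitFreq_mono (z : ℕ → ℝ) {S T : Set ℝ} (h : S ⊆ T) (n : ℕ) :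
    hitFreq z S n ≤ hitFreq z T n := by
  unfold hitFreq
  gcongr

lemma hitFreq_diff (z : ℕ → ℝ) {S T : Set ℝ} (h : S ⊆ T) (n : ℕ) :
    hitFreq z (T \ S) n = hitFreq z T n - hitFreq z S n := by
  unfold hitFreq
  rw [← sub_div, ← Finset.sum_sub_distrib]
  congr 2 with k
  by_cases hS : z k ∈ S
  · simp [hS, h hS]
  · by_cases hT : z k ∈ T <;> simp [hS, hT]

/-- Convergence of the empirical distribution function at all rationals extends, for continuous `F`,
to all reals `b`, whether or not the endpoint `b` is counted. -/
lemma tendsto_hitFreq_of_rat {F : ℝ → ℝ} (hF : Continuous F) {z : ℕ → ℝ}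
    (hz : ∀ q : ℚ, Tendsto (hitFreq z (Set.Iic (q : ℝ))) atTop (nhds (F q)))
    {b : ℝ} {S : Set ℝ} (h₁ : Set.Iio b ⊆ S) (h₂ : S ⊆ Set.Iic b) :
    Tendsto (hitFreq z S) atTop (nhds (F b)) := by
  rw [tendsto_order]
  constructor
  · intro l hl
    obtain ⟨ε, hε, hb⟩ := Metric.isOpen_iff.1 (isOpen_lt continuous_const hF) b hl
    obtain ⟨q, hq₁, hq₂⟩ := exists_rat_btwn (sub_lt_self b hε)
    have hq : l < F q := hb (by rw [Metric.mem_ball, Real.dist_eq, abs_lt]; constructor <;> linarith)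
    filter_upwards [(hz q).eventually (lt_mem_nhds hq)] with n hn
    exact hn.trans_le (hitFreq_mono z (fun x hx => h₁ (lt_of_le_of_lt hx hq₂)) n)
  · intro u hu
    obtain ⟨ε, hε, hb⟩ := Metric.isOpen_iff.1 (isOpen_lt hF continuous_const) b hu
    obtain ⟨q, hq₁, hq₂⟩ := exists_rat_btwn (lt_add_of_pos_right b hε)
    have hq : F q < u := hb (by rw [Metric.mem_ball, Real.dist_eq, abs_lt]; constructor <;> linarith)
    filter_upwards [(hz q).eventually (gt_mem_nhds hq)] with n hn
    exact (hitFreq_mono z (fun x hx => (h₂ hx).trans hq₁.le) n).trans_lt hn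

lemma mem_equidistributedSeqs_of_rat {F : ℝ → ℝ} (hF : Continuous F) {z : ℕ → ℝ}
    (hz : ∀ q : ℚ, Tendsto (hitFreq z (Set.Iic (q : ℝ))) atTop (nhds (F q))) :
    z ∈ equidistributedSeqs F := by
  have hIic (b : ℝ) : Tendsto (hitFreq z (Set.Iic b)) atTop (nhds (F b)) :=
    tendsto_hitFreq_of_rat hF hz Set.Iio_subset_Iic_self subset_rfl
  have hIio (b : ℝ) : Tendsto (hitFreq z (Set.Iio b)) atTop (nhds (F b)) :=
    tendsto_hitFreq_of_rat hF hz subset_rfl Set.Iio_subset_Iic_self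
  refine ⟨fun a b hab => ?_, fun b => ?_, fun a => ?_⟩
  · simp_rw [card_filter_div_eq_hitFreq]
    refine ((hIic b).sub (hIio a)).congr fun n => ?_
    have hsub : Set.Iio a ⊆ Set.Iic b := fun x hx => (lt_trans hx hab).le
    rw [← hitFreq_diff z hsub]
    congr 1
    ext x
    simp
  · simp_rw [card_filter_div_eq_hitFreq]
    exact hIic b
  · simp_rw [card_filter_div_eq_hitFreq]
    refine (tendsto_const_nhds.sub (hIio a)).congr' ?_
    filter_upwards [eventually_gt_atTop 0] with n hn
    have h1 : hitFreq z Set.univ n = 1 := by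
      have : (n : ℝ) ≠ 0 := by positivity
      simp [hitFreq, this]
    rw [← h1, ← hitFreq_diff z (Set.subset_univ _)]
    congr 1
    ext x
    simp

lemma IsCountableProductOf.eq_infinitePi {P : Measure (ℕ → ℝ)} {p : Measure ℝ}
    [IsProbabilityMeasure p] (hP : IsCountableProductOf P p) :
    P = Measure.infinitePi fun _ => p :=
  Measure.eq_infinitePi _ fun s B hB => hP.2 s B fun i _ => hB i

/-- The strong law of large numbers for the indicator of a measurable set. -/
lemma ae_tendsto_hitFreq (p : Measure ℝ) [IsProbabilityMeasure p] {S : Set ℝ}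
    (hS : MeasurableSet S) :
    ∀ᵐ z ∂(Measure.infinitePi fun _ : ℕ => p), Tendsto (hitFreq z S) atTop (nhds (p.real S)) := by
  have hf : Measurable (S.indicator fun _ => (1 : ℝ)) := measurable_const.indicator hS
  have hmp (i : ℕ) := measurePreserving_eval_infinitePi (fun _ : ℕ => p) i
  have hint : Integrable (S.indicator fun _ => (1 : ℝ)) p := (integrable_const 1).indicator hS
  have key := ProbabilityTheory.strong_law_ae_real (μ := Measure.infinitePi fun _ : ℕ => p)
    (fun i z => S.indicator (fun _ => (1 : ℝ)) (z i))
    ((hmp 0).integrable_comp_of_integrable hint)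
    (fun i j hij => (ProbabilityTheory.iIndepFun_infinitePi (P := fun _ : ℕ => p)
      (X := fun _ => S.indicator fun _ => (1 : ℝ)) fun _ => hf).indepFun hij)
    (fun i => by
      refine ⟨(hf.comp (measurable_pi_apply i)).aemeasurable,
        (hf.comp (measurable_pi_apply 0)).aemeasurable, ?_⟩
      have h (j : ℕ) : Measure.map (fun z : ℕ → ℝ => S.indicator (fun _ => (1 : ℝ)) (z j))
          (Measure.infinitePi fun _ : ℕ => p) = p.map (S.indicator fun _ => (1 : ℝ)) := by
        conv_rhs => rw [← (hmp j).map_eq]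
        exact (Measure.map_map hf (measurable_pi_apply j)).symm
      rw [h i, h 0])
  have hE : ∫ z : ℕ → ℝ, S.indicator (fun _ => (1 : ℝ)) (z 0) ∂(Measure.infinitePi fun _ => p)
      = p.real S := by
    rw [← integral_map (φ := fun z : ℕ → ℝ => z 0) (f := S.indicator fun _ => (1 : ℝ))
      (measurable_pi_apply 0).aemeasurable hf.aestronglyMeasurable, Measure.infinitePi_map_eval]
    simp [integral_indicator hS]
  rw [hE] at key
  exact key

theorem product_measure_of_equidistributed_seqs_eq_one
    (F : ℝ → ℝ) (hF_mono : StrictMono F) (hF_cont : Continuous F)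
    (p : Measure ℝ) [IsProbabilityMeasure p]
    (hF_cdf : ∀ s : ℝ, (p (Set.Iic s)).toReal = F s)
    (P : Measure (ℕ → ℝ)) (hP : IsCountableProductOf P p) :
    P (equidistributedSeqs F) = 1 := by
  rw [hP.eq_infinitePi]
  have hae : ∀ᵐ z ∂(Measure.infinitePi fun _ : ℕ => p), z ∈ equidistributedSeqs F := by
    have h := ae_all_iff.2 fun q : ℚ => ae_tendsto_hitFreq p (measurableSet_Iic (a := (q : ℝ)))
    filter_upwards [h] with z hz
    refine mem_equidistributedSeqs_of_rat hF_cont fun q => ?_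
    rw [← hF_cdf]
    exact hz q
  exact (measure_congr (eventuallyEq_univ.2 hae)).trans measure_univ
end

section
/- Fix t > 0, x₀ ∈ ℝ, μ ∈ ℝ, θ > 0. For each σ² > 0 let γ_{σ²} be the Gaussian probability measure on ℝ with mean m_t = x₀·e^{−θt} + μ·(1 − e^{−θt}) and variance σ_t² = (σ²/(2θ))·(1 − e^{−2θt}). Define T***_n : ℝⁿ → ℝ by T***_n(z_1,…,z_n) = (2θ · Σ_{k=1}^n (z_k − x₀·e^{−θt} − μ·(1 − e^{−θt}))²) / (n·(1 − e^{−2θt})), and define T_{***}^{(0)} : ℝ^ℕ → ℝ by T_{***}^{(0)}((z_k)_{k∈ℕ}) = liminf_{n→∞} T***_n(z_1,…,z_n). Then for every σ² > 0, γ_{σ²}^ℕ({(z_k)_{k∈ℕ} ∈ ℝ^ℕ : T_{***}^{(0)}((z_k)) = σ²}) = 1; that is, T_{***}^{(0)} is an infinite-sample consistent estimator of σ² for the family (γ_{σ²}^ℕ)_{σ²>0}. -/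
/-!
Under `ν^ℕ` the coordinates are i.i.d. with law `ν`, hence so are the centred squares
`(z k - m) ^ 2`, whose common expectation is the variance of `ν`. The strong law of large numbers
shows that their empirical means converge almost surely to `σ_t² = v / (2θ) * (1 - exp (-2θt))`.
Multiplying by `2θ / (1 - exp (-2θt))` turns this limit into `v`, and the liminf of a convergent
sequence is its limit.
-/

open MeasureTheory ProbabilityTheory Filter Real

/-- Each coordinate has law `ν`: the cylinder condition for a single index. -/
lemma IsCountableProductOf.map_eval {P : Measure (ℕ → ℝ)} {ν : Measure ℝ}
    (h : IsCountableProductOf P ν) (i : ℕ) : P.map (fun z => z i) = ν := by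
  ext B hB
  rw [Measure.map_apply (measurable_pi_apply i) hB]
  simpa [Set.preimage] using h.2 {i} (fun _ => B) (fun _ _ => hB)

lemma IsCountableProductOf.iIndepFun_eval {P : Measure (ℕ → ℝ)} {ν : Measure ℝ}
    (h : IsCountableProductOf P ν) : iIndepFun (fun (i : ℕ) (z : ℕ → ℝ) => z i) P := by
  rw [iIndepFun_iff_measure_inter_preimage_eq_mul]
  intro s B hB
  have hset : (⋂ i ∈ s, (fun z : ℕ → ℝ => z i) ⁻¹' B i) = {z | ∀ i ∈ s, z i ∈ B i} := by
    ext z; simp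
  rw [hset, h.2 s B hB]
  refine Finset.prod_congr rfl fun i hi => ?_
  rw [← Measure.map_apply (measurable_pi_apply i) (hB i hi), h.map_eval]

/-- Strong law for the empirical second moment about the known mean of a Gaussian sample. -/
lemma IsCountableProductOf.ae_tendsto_sq {P : Measure (ℕ → ℝ)} {m : ℝ} {s : NNReal}
    (h : IsCountableProductOf P (gaussianReal m s)) :
    ∀ᵐ z ∂P, Tendsto (fun n : ℕ => (∑ k ∈ Finset.range n, (z k - m) ^ 2) / (n : ℝ)) atTop
      (nhds (s : ℝ)) := by
  have hg : Measurable fun x : ℝ => (x - m) ^ 2 := by fun_prop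
  have hint : Integrable (fun x : ℝ => (x - m) ^ 2) (gaussianReal m s) :=
    ((memLp_id_gaussianReal 2).sub (memLp_const m)).integrable_sq
  have hmean : ∫ z, (z 0 - m) ^ 2 ∂P = s := by
    have h1 := integral_map (μ := P) (measurable_pi_apply (0 : ℕ)).aemeasurable
      (f := fun x : ℝ => (x - m) ^ 2) hg.aestronglyMeasurable
    rw [h.map_eval 0] at h1
    rw [← h1, ← variance_fun_id_gaussianReal (μ := m) (v := s),
      variance_eq_integral aemeasurable_id', integral_id_gaussianReal]
  have hslln := strong_law_ae_real (μ := P) (fun (k : ℕ) (z : ℕ → ℝ) => (z k - m) ^ 2)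
    (by
      rw [← h.map_eval 0] at hint
      exact hint.comp_measurable (measurable_pi_apply 0))
    (fun i j hij => (h.iIndepFun_eval.indepFun hij).comp hg hg)
    (fun i => IdentDistrib.comp
      ⟨(measurable_pi_apply i).aemeasurable, (measurable_pi_apply 0).aemeasurable,
        (h.map_eval i).trans (h.map_eval 0).symm⟩ hg)
  rwa [hmean] at hslln

theorem ou_sigma_sq_liminf_infinite_sample_consistent
    (t x₀ μ θ : ℝ) (ht : 0 < t) (hθ : 0 < θ)
    (P : ℝ → Measure (ℕ → ℝ))
    (hP : ∀ v : ℝ, 0 < v → IsCountableProductOf (P v)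
      (gaussianReal (x₀ * Real.exp (-θ * t) + μ * (1 - Real.exp (-θ * t)))
        ((v / (2 * θ) * (1 - Real.exp (-2 * θ * t))).toNNReal))) :
    ∀ v : ℝ, 0 < v →
      P v {z : ℕ → ℝ |
        Filter.liminf (fun n : ℕ =>
            2 * θ * (∑ k ∈ Finset.range n,
                (z k - x₀ * Real.exp (-θ * t) - μ * (1 - Real.exp (-θ * t))) ^ 2)
              / (n * (1 - Real.exp (-2 * θ * t))))
          atTop = v} = 1 := by
  intro v hv
  have hP1 : IsProbabilityMeasure (P v) := (hP v hv).1
  have hc : 0 < 1 - Real.exp (-2 * θ * t) := by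
    have : Real.exp (-2 * θ * t) < 1 := Real.exp_lt_one_iff.mpr (by nlinarith [mul_pos hθ ht])
    linarith
  rw [← measure_univ (μ := P v)]
  refine measure_congr (eventuallyEq_univ.mpr ?_)
  filter_upwards [IsCountableProductOf.ae_tendsto_sq (hP v hv)] with z hz
  rw [Real.coe_toNNReal _ (by positivity)] at hz
  have hz' := hz.const_mul (2 * θ / (1 - Real.exp (-2 * θ * t)))
  have hlim : 2 * θ / (1 - Real.exp (-2 * θ * t)) * (v / (2 * θ) * (1 - Real.exp (-2 * θ * t)))
      = v := by
    generalize 1 - Real.exp (-2 * θ * t) = c at hc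
    field_simp
  rw [hlim] at hz'
  refine (hz'.congr fun n => ?_).liminf_eq
  simp only [sub_sub]
  rw [div_mul_div_comm, mul_comm (n : ℝ)]
end
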